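/- Let φ be a finite Blaschke product which is not an elliptic automorphism of 𝔻. Then the composition operator C_φ : A(𝔻) → A(𝔻) is mean ergodic if and only if φ is a parabolic automorphism of 𝔻. -/

import Mathlib

open Metric Set Filter Complex
open scoped Topology Classical

noncomputable section

/-- Membership in the disc algebra `A(𝔻)`: continuous on the closed unit disc and
holomorphic on the open unit disc. -/
def IsDiscAlg (f : ℂ → ℂ) : Prop :=
  ContinuousOn f (closedBall (0:ℂ) 1) ∧ DifferentiableOn ℂ f (ball (0:ℂ) 1)

/-- Membership in `H^∞(𝔻)`: bounded and holomorphic on the open unit disc. -/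
def IsHInf (f : ℂ → ℂ) : Prop :=
  DifferentiableOn ℂ f (ball (0:ℂ) 1) ∧ ∃ M : ℝ, ∀ z ∈ ball (0:ℂ) 1, ‖f z‖ ≤ M

/-- The Cesàro means `(C_φ)_[n] f = (1/n) ∑_{m=1}^n f ∘ φ^m` of the composition
operator `C_φ f = f ∘ φ`. -/
def cesaro (φ f : ℂ → ℂ) (n : ℕ) (z : ℂ) : ℂ :=
  (n : ℂ)⁻¹ * ∑ m ∈ Finset.Icc 1 n, f (φ^[m] z)

/-- `C_φ` is mean ergodic on `A(𝔻)`: for each `f ∈ A(𝔻)` the Cesàro means converge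
in the sup norm on the closed disc. -/
def MeanErgodicDiscAlg (φ : ℂ → ℂ) : Prop :=
  ∀ f : ℂ → ℂ, IsDiscAlg f →
    ∃ g : ℂ → ℂ, TendstoUniformlyOn (cesaro φ f) g atTop (closedBall (0:ℂ) 1)

/-- `C_φ` is uniformly mean ergodic on `A(𝔻)`: the Cesàro means converge in operator
norm, i.e. uniformly over the unit ball of `A(𝔻)`. -/
def UnifMeanErgodicDiscAlg (φ : ℂ → ℂ) : Prop :=
  ∃ P : (ℂ → ℂ) → ℂ → ℂ, ∀ ε > (0:ℝ), ∃ N : ℕ, ∀ n ≥ N,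
    ∀ f : ℂ → ℂ, IsDiscAlg f → (∀ z ∈ closedBall (0:ℂ) 1, ‖f z‖ ≤ 1) →
      ∀ z ∈ closedBall (0:ℂ) 1, ‖cesaro φ f n z - P f z‖ ≤ ε

/-- `C_φ` is mean ergodic on `H^∞(𝔻)`: for each `f ∈ H^∞(𝔻)` the Cesàro means converge
in the sup norm on the open disc. -/
def MeanErgodicHInf (φ : ℂ → ℂ) : Prop :=
  ∀ f : ℂ → ℂ, IsHInf f →
    ∃ g : ℂ → ℂ, TendstoUniformlyOn (cesaro φ f) g atTop (ball (0:ℂ) 1)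

/-- `C_φ` is uniformly mean ergodic on `H^∞(𝔻)`: the Cesàro means converge in operator
norm, i.e. uniformly over the unit ball of `H^∞(𝔻)`. -/
def UnifMeanErgodicHInf (φ : ℂ → ℂ) : Prop :=
  ∃ P : (ℂ → ℂ) → ℂ → ℂ, ∀ ε > (0:ℝ), ∃ N : ℕ, ∀ n ≥ N,
    ∀ f : ℂ → ℂ, IsHInf f → (∀ z ∈ ball (0:ℂ) 1, ‖f z‖ ≤ 1) →
      ∀ z ∈ ball (0:ℂ) 1, ‖cesaro φ f n z - P f z‖ ≤ ε

/-- `φ` is an automorphism (biholomorphic self-map) of the open unit disc. -/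
def IsDiscAutomorphism (φ : ℂ → ℂ) : Prop :=
  DifferentiableOn ℂ φ (ball (0:ℂ) 1) ∧ MapsTo φ (ball (0:ℂ) 1) (ball (0:ℂ) 1) ∧
  ∃ ψ : ℂ → ℂ, DifferentiableOn ℂ ψ (ball (0:ℂ) 1) ∧
    MapsTo ψ (ball (0:ℂ) 1) (ball (0:ℂ) 1) ∧
    (∀ z ∈ ball (0:ℂ) 1, ψ (φ z) = z) ∧ ∀ z ∈ ball (0:ℂ) 1, φ (ψ z) = z

/-- An elliptic automorphism of the disc: an automorphism with a fixed point in `𝔻`. -/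
def IsEllipticAutomorphism (φ : ℂ → ℂ) : Prop :=
  IsDiscAutomorphism φ ∧ ∃ z ∈ ball (0:ℂ) 1, φ z = z

/-- A hyperbolic automorphism of the disc: an automorphism with exactly two fixed
points, both on the unit circle. -/
def IsHyperbolicAutomorphism (φ : ℂ → ℂ) : Prop :=
  IsDiscAutomorphism φ ∧ ∃ p q : ℂ, p ≠ q ∧ ‖p‖ = 1 ∧ ‖q‖ = 1 ∧ φ p = p ∧ φ q = q ∧
    ∀ z ∈ closedBall (0:ℂ) 1, φ z = z → z = p ∨ z = q

/-- A parabolic automorphism of the disc: an automorphism with exactly one fixed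
point, lying on the unit circle. -/
def IsParabolicAutomorphism (φ : ℂ → ℂ) : Prop :=
  IsDiscAutomorphism φ ∧ ∃ p : ℂ, ‖p‖ = 1 ∧ φ p = p ∧
    ∀ z ∈ closedBall (0:ℂ) 1, φ z = z → z = p

/-- A set `J ⊆ ℕ` has density one: `#(J ∩ [0,N]) / N → 1` as `N → ∞`. -/
def HasDensityOne (J : Set ℕ) : Prop :=
  Tendsto (fun N : ℕ => (((Finset.range (N + 1)).filter (fun n => n ∈ J)).card : ℝ) / N)
    atTop (𝓝 1)

/-- A typical weight on `𝔻`: continuous, strictly positive, bounded, radial,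
non-increasing in `|z|`, and tending to `0` as `|z| → 1`. -/
def IsTypicalWeight (v : ℂ → ℝ) : Prop :=
  ContinuousOn v (ball (0:ℂ) 1) ∧ (∀ z ∈ ball (0:ℂ) 1, 0 < v z) ∧
  (∃ M : ℝ, ∀ z ∈ ball (0:ℂ) 1, v z ≤ M) ∧
  (∀ z ∈ ball (0:ℂ) 1, ∀ w ∈ ball (0:ℂ) 1, ‖z‖ = ‖w‖ → v z = v w) ∧
  (∀ z ∈ ball (0:ℂ) 1, ∀ w ∈ ball (0:ℂ) 1, ‖z‖ ≤ ‖w‖ → v w ≤ v z) ∧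
  (∀ ε > (0:ℝ), ∃ r : ℝ, r < 1 ∧ ∀ z ∈ ball (0:ℂ) 1, r ≤ ‖z‖ → v z < ε)

/-- Membership in the weighted space `H_v^∞`. -/
def IsHvInf (v : ℂ → ℝ) (f : ℂ → ℂ) : Prop :=
  DifferentiableOn ℂ f (ball (0:ℂ) 1) ∧ ∃ M : ℝ, ∀ z ∈ ball (0:ℂ) 1, v z * ‖f z‖ ≤ M

/-- Membership in the weighted space `H_v^0`. -/
def IsHv0 (v : ℂ → ℝ) (f : ℂ → ℂ) : Prop :=
  IsHvInf v f ∧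
  ∀ ε > (0:ℝ), ∃ r : ℝ, r < 1 ∧ ∀ z ∈ ball (0:ℂ) 1, r ≤ ‖z‖ → v z * ‖f z‖ < ε

/-- The Blaschke factor. -/
def bl (a z : ℂ) : ℂ := (z - a) / (1 - z * (starRingEnd ℂ) a)

lemma bl_key (a z : ℂ) : Complex.normSq (1 - z * (starRingEnd ℂ) a) - Complex.normSq (z - a)
    = (1 - Complex.normSq z) * (1 - Complex.normSq a) := by
  simp only [Complex.normSq_apply, Complex.sub_re, Complex.sub_im, Complex.mul_re, Complex.mul_im,
    Complex.conj_re, Complex.conj_im, Complex.one_re, Complex.one_im]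
  ring

lemma den_ne {a z : ℂ} (ha : ‖a‖ < 1) (hz : ‖z‖ ≤ 1) : 1 - z * (starRingEnd ℂ) a ≠ 0 := by
  intro h
  have h1 : z * (starRingEnd ℂ) a = 1 := (sub_eq_zero.1 h).symm
  have h2 : ‖z‖ * ‖a‖ = 1 := by
    have := congrArg norm h1
    simpa using this
  nlinarith [norm_nonneg z, norm_nonneg a]

lemma bl_norm_sq {a z : ℂ} (ha : ‖a‖ < 1) (hz : ‖z‖ ≤ 1) :
    1 - ‖bl a z‖ ^ 2 = (1 - ‖z‖ ^ 2) * (1 - ‖a‖ ^ 2) / ‖1 - z * (starRingEnd ℂ) a‖ ^ 2 := by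
  have h := bl_key a z
  have h0 : ‖1 - z * (starRingEnd ℂ) a‖ ≠ 0 := norm_ne_zero_iff.2 (den_ne ha hz)
  simp only [Complex.normSq_eq_norm_sq] at h
  unfold bl
  rw [norm_div, ← h]
  field_simp

lemma sq_pos_of_lt {a : ℂ} (ha : ‖a‖ < 1) : 0 < 1 - ‖a‖ ^ 2 := by
  nlinarith [norm_nonneg a]

lemma bl_lt {a z : ℂ} (ha : ‖a‖ < 1) (hz : ‖z‖ < 1) : ‖bl a z‖ < 1 := by
  have h := bl_norm_sq ha hz.le
  have h0 : 0 < ‖1 - z * (starRingEnd ℂ) a‖ := norm_pos_iff.2 (den_ne ha hz.le)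
  have h1 := sq_pos_of_lt ha
  have h2 := sq_pos_of_lt hz
  have : 0 < 1 - ‖bl a z‖ ^ 2 := by rw [h]; positivity
  nlinarith [norm_nonneg (bl a z)]

lemma bl_one {a z : ℂ} (ha : ‖a‖ < 1) (hz : ‖z‖ = 1) : ‖bl a z‖ = 1 := by
  have h := bl_norm_sq ha hz.le
  rw [hz] at h
  have : ‖bl a z‖ ^ 2 = 1 := by
    simp at h; linarith
  nlinarith [norm_nonneg (bl a z)]

lemma bl_le {a z : ℂ} (ha : ‖a‖ < 1) (hz : ‖z‖ ≤ 1) : ‖bl a z‖ ≤ 1 := by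
  rcases hz.lt_or_eq with h | h
  · exact (bl_lt ha h).le
  · exact (bl_one ha h).le

lemma bl_inv {a z : ℂ} (ha : ‖a‖ < 1) (hz : ‖z‖ ≤ 1) : bl (-a) (bl a z) = z := by
  have h0 := den_ne ha hz
  have h1 := den_ne ha ha.le
  have h2 : bl a z * (1 - z * (starRingEnd ℂ) a) = z - a := div_mul_cancel₀ _ h0
  have h3 := den_ne (a := -a) (by simpa using ha) (bl_le ha hz)
  have e : bl (-a) (bl a z) = (bl a z - -a) / (1 - bl a z * (starRingEnd ℂ) (-a)) := rfl
  rw [e, div_eq_iff h3, map_neg]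
  apply mul_right_cancel₀ h0
  linear_combination (1 - z * (starRingEnd ℂ) a) * h2

lemma bl_self (a : ℂ) : bl a a = 0 := by simp [bl]

lemma bl_diff {a : ℂ} (ha : ‖a‖ < 1) : DifferentiableOn ℂ (bl a) (ball 0 1) := by
  intro z hz
  unfold bl
  have := den_ne ha (mem_ball_zero_iff.1 hz).le
  apply DifferentiableAt.differentiableWithinAt
  fun_prop (disch := exact this)

lemma bl_contAt {a z : ℂ} (ha : ‖a‖ < 1) (hz : ‖z‖ ≤ 1) : ContinuousAt (bl a) z := by
  unfold bl
  have := den_ne ha hz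
  fun_prop (disch := exact this)

lemma bl_maps {a : ℂ} (ha : ‖a‖ < 1) : MapsTo (bl a) (ball 0 1) (ball 0 1) := by
  intro z hz
  rw [mem_ball_zero_iff] at *
  exact bl_lt ha hz

/-- Schwarz Pick lemma. -/
lemma schwarz_pick {φ : ℂ → ℂ} (hd : DifferentiableOn ℂ φ (ball 0 1))
    (hm : MapsTo φ (ball 0 1) (ball 0 1)) {z w : ℂ} (hz : ‖z‖ < 1) (hw : ‖w‖ < 1) :
    ‖bl (φ w) (φ z)‖ ≤ ‖bl w z‖ ∧ (‖bl (φ w) (φ z)‖ = ‖bl w z‖ → z ≠ w → IsDiscAutomorphism φ) := by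
  have hw' : ‖-w‖ < 1 := by simpa using hw
  have hφw : ‖φ w‖ < 1 := by simpa using hm (mem_ball_zero_iff.2 hw)
  have hφw' : ‖-φ w‖ < 1 := by simpa using hφw
  set ψ : ℂ → ℂ := fun ζ => bl (φ w) (φ (bl (-w) ζ)) with hψ
  have hψm : MapsTo ψ (ball 0 1) (ball 0 1) := (bl_maps hφw).comp (hm.comp (bl_maps hw'))
  have hψd : DifferentiableOn ℂ ψ (ball 0 1) :=
    (bl_diff hφw).comp (hd.comp (bl_diff hw') (bl_maps hw')) (hm.comp (bl_maps hw'))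
  have h0 : ψ 0 = 0 := by
    have : bl (-w) 0 = w := by simp [bl]
    simp [hψ, this, bl_self]
  have hψz : ψ (bl w z) = bl (φ w) (φ z) := by simp only [hψ, bl_inv hw hz.le]
  have hcm : MapsTo ψ (ball 0 1) (closedBall 0 1) := hψm.mono_right ball_subset_closedBall
  have hlt := bl_lt hw hz
  refine ⟨?_, ?_⟩
  · have := Complex.norm_le_norm_of_mapsTo_ball hψd hcm h0 hlt
    rwa [hψz] at this
  · intro he hne
    have hzw : bl w z ≠ 0 := by
      unfold bl
      exact div_ne_zero (sub_ne_zero.2 hne) (den_ne hw hz.le)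
    obtain ⟨C, hC, hE⟩ := Complex.affine_of_mapsTo_ball_of_exists_norm_dslope_eq_div' (R₂ := 1) hψd
      (by rw [h0]; exact hcm) ⟨bl w z, mem_ball_zero_iff.2 hlt, by
        rw [dslope_of_ne _ hzw, slope_def_field, h0, hψz]
        simp [he, hzw]⟩
    simp only [div_one] at hC
    have hC0 : C ≠ 0 := by
      intro h; simp [h] at hC
    have hE' : ∀ ζ, ‖ζ‖ < 1 → ψ ζ = ζ * C := by
      intro ζ hζ
      have := hE (mem_ball_zero_iff.2 hζ)
      simpa [h0] using this
    have hφE : ∀ x, ‖x‖ < 1 → bl (φ w) (φ x) = bl w x * C := by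
      intro x hx
      rw [← hE' _ (bl_lt hw hx)]
      simp only [hψ, bl_inv hw hx.le]
    have hCm : ∀ x, ‖x‖ < 1 → ‖bl (φ w) x * C⁻¹‖ < 1 := by
      intro x hx
      rw [norm_mul, norm_inv, hC]; simpa using bl_lt hφw hx
    refine ⟨hd, hm, fun x => bl (-w) (bl (φ w) x * C⁻¹), ?_, ?_, ?_, ?_⟩
    · apply (bl_diff hw').comp ((bl_diff hφw).mul_const _)
      intro x hx
      exact mem_ball_zero_iff.2 (hCm x (mem_ball_zero_iff.1 hx))
    · intro x hx
      exact bl_maps hw' (mem_ball_zero_iff.2 (hCm x (mem_ball_zero_iff.1 hx)))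
    · intro x hx
      rw [mem_ball_zero_iff] at hx
      simp only [hφE x hx]
      rw [mul_assoc, mul_inv_cancel₀ hC0, mul_one, bl_inv hw hx.le]
    · intro x hx
      have hx1 := mem_ball_zero_iff.1 hx
      set y := bl (φ w) x * C⁻¹ with hy
      have hy1 : ‖y‖ < 1 := hCm x hx1
      have h1 : ψ y = bl (φ w) x := by
        rw [hE' y hy1, hy, mul_assoc, inv_mul_cancel₀ hC0, mul_one]
      have h2 : ‖φ (bl (-w) y)‖ < 1 := by
        simpa using hm (bl_maps hw' (mem_ball_zero_iff.2 hy1))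
      have h3 := bl_inv hφw h2.le
      have h4 : bl (φ w) (φ (bl (-w) y)) = bl (φ w) x := h1
      rw [h4, bl_inv hφw hx1.le] at h3
      exact h3.symm

/-- Orbits of a non-automorphism accumulate only at fixed points. -/
lemma orbit_acc {φ : ℂ → ℂ} (hd : DifferentiableOn ℂ φ (ball 0 1))
    (hm : MapsTo φ (ball 0 1) (ball 0 1)) (hmc : MapsTo φ (closedBall 0 1) (closedBall 0 1))
    (hc : ContinuousOn φ (closedBall 0 1))
    (hna : ¬ IsDiscAutomorphism φ) {z ζ : ℂ} (hz : ‖z‖ < 1) {s : ℕ → ℕ}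
    (hs : Tendsto s atTop atTop)
    (hlim : Tendsto (fun k => φ^[s k] z) atTop (𝓝 ζ)) : φ ζ = ζ := by
  have horb : ∀ k, ‖φ^[k] z‖ < 1 := fun k =>
    mem_ball_zero_iff.1 (hm.iterate k (mem_ball_zero_iff.2 hz))
  have hζ : ‖ζ‖ ≤ 1 := le_of_tendsto hlim.norm (Eventually.of_forall fun k => (horb _).le)
  have hcl : ∀ {y : ℂ}, ‖y‖ ≤ 1 → y ∈ closedBall (0:ℂ) 1 := fun h => mem_closedBall_zero_iff.2 h
  have step : ∀ {u : ℕ → ℂ} {x : ℂ}, (∀ k, ‖u k‖ < 1) → Tendsto u atTop (𝓝 x) →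
      ‖x‖ ≤ 1 → Tendsto (fun k => φ (u k)) atTop (𝓝 (φ x)) := by
    intro u x hu hux hx
    exact (hc x (hcl hx)).tendsto.comp (tendsto_nhdsWithin_iff.2
      ⟨hux, Eventually.of_forall fun k => hcl (hu k).le⟩)
  have h1 : Tendsto (fun k => φ^[s k + 1] z) atTop (𝓝 (φ ζ)) := by
    simp only [Function.iterate_succ_apply']
    exact step (fun k => horb _) hlim hζ
  have hφζ : ‖φ ζ‖ ≤ 1 := mem_closedBall_zero_iff.1 (hmc (hcl hζ))
  have h2 : Tendsto (fun k => φ^[s k + 2] z) atTop (𝓝 (φ (φ ζ))) := by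
    have := step (fun k => horb _) h1 hφζ
    simpa only [← Function.iterate_succ_apply'] using this
  set d : ℕ → ℝ := fun k => ‖bl (φ^[k+1] z) (φ^[k] z)‖ with hdd
  have hanti : Antitone d := by
    apply antitone_nat_of_succ_le
    intro k
    have := (schwarz_pick hd hm (horb k) (horb (k+1))).1
    simpa only [hdd, ← Function.iterate_succ_apply' φ] using this
  rcases hζ.lt_or_eq with hlt | heq
  · by_contra hne
    have hφlt : ‖φ ζ‖ < 1 := mem_ball_zero_iff.1 (hm (mem_ball_zero_iff.2 hlt))
    have hbdd : BddBelow (range d) := ⟨0, by rintro _ ⟨k, rfl⟩; exact norm_nonneg _⟩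
    have hℓ := tendsto_atTop_ciInf hanti hbdd
    set ℓ := ⨅ i, d i
    have blt : ∀ {u v : ℕ → ℂ} {x y : ℂ}, Tendsto u atTop (𝓝 x) → Tendsto v atTop (𝓝 y) →
        ‖x‖ < 1 → ‖y‖ < 1 → Tendsto (fun k => ‖bl (u k) (v k)‖) atTop (𝓝 ‖bl x y‖) := by
      intro u v x y hu hv hx hy
      unfold bl
      apply Tendsto.norm
      apply Tendsto.div (hv.sub hu) _ (den_ne hx hy.le)
      exact tendsto_const_nhds.sub (hv.mul ((Complex.continuous_conj.tendsto x).comp hu))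
    have e1 := tendsto_nhds_unique (blt h1 hlim hφlt hlt) (hℓ.comp hs)
    have hs1 : Tendsto (fun k => s k + 1) atTop atTop := 
      tendsto_atTop_mono (fun k => Nat.le_succ _) hs
    have hφφlt : ‖φ (φ ζ)‖ < 1 := mem_ball_zero_iff.1 (hm (mem_ball_zero_iff.2 hφlt))
    have e2 := tendsto_nhds_unique (blt h2 h1 hφφlt hφlt) (hℓ.comp hs1)
    exact hna ((schwarz_pick hd hm hlt hφlt).2 (e2.trans e1.symm) (Ne.symm hne))
  · have hd0 : d 0 < 1 := bl_lt (horb _) (horb _)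
    have hle : ∀ k, ‖φ^[s k] z - φ^[s k + 1] z‖ ≤
        d 0 * ‖1 - φ^[s k] z * (starRingEnd ℂ) (φ^[s k + 1] z)‖ := by
      intro k
      have h := hanti (Nat.zero_le (s k))
      have hne := norm_pos_iff.2 (den_ne (horb (s k + 1)) (horb (s k)).le)
      simp only [hdd] at h
      unfold bl at h
      rw [norm_div, div_le_iff₀ hne] at h
      exact h
    have hl := le_of_tendsto_of_tendsto' (hlim.sub h1).norm
      ((tendsto_const_nhds.sub (hlim.mul ((Complex.continuous_conj.tendsto _).comp h1))).norm.const_mul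
        (d 0)) hle
    have e : ‖1 - ζ * (starRingEnd ℂ) (φ ζ)‖ = ‖ζ - φ ζ‖ := by
      have : (1:ℂ) = ζ * (starRingEnd ℂ) ζ := by
        rw [Complex.mul_conj, Complex.normSq_eq_norm_sq, heq]; simp
      rw [this, ← mul_sub, ← map_sub, norm_mul, heq, one_mul, RCLike.norm_conj]
    rw [e] at hl
    have : ‖ζ - φ ζ‖ = 0 := by nlinarith [norm_nonneg (ζ - φ ζ)]
    exact (sub_eq_zero.1 (norm_eq_zero.1 this)).symm

/-- Cesaro means at a point whose orbit values converge. -/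
lemma cesaro_tendsto {φ f : ℂ → ℂ} {z c : ℂ}
    (h : Tendsto (fun k => f (φ^[k] z)) atTop (𝓝 c)) :
    Tendsto (fun n => cesaro φ f n z) atTop (𝓝 c) := by
  have h1 : Tendsto (fun k => f (φ^[k+1] z)) atTop (𝓝 c) := h.comp (tendsto_add_atTop_nat 1)
  have h2 := h1.cesaro_smul
  refine h2.congr fun n => ?_
  unfold cesaro
  rw [Complex.real_smul]
  push_cast
  congr 1
  rw [Finset.range_eq_Ico, Finset.sum_Ico_add' (fun k => f (φ^[k] z)) 0 n 1]
  rfl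

lemma cesaro_cont {φ f : ℂ → ℂ} (hmc : MapsTo φ (closedBall 0 1) (closedBall 0 1))
    (hc : ContinuousOn φ (closedBall 0 1)) (hf : ContinuousOn f (closedBall 0 1)) (n : ℕ) :
    ContinuousOn (cesaro φ f n) (closedBall 0 1) := by
  unfold cesaro
  apply ContinuousOn.mul continuousOn_const
  apply continuousOn_finsetSum
  intro m _
  exact hf.comp (hc.iterate hmc m) (hmc.iterate m)

/-- If the interior orbits give Cesaro limit `c`, so do all boundary orbits. -/
lemma me_limit {φ f : ℂ → ℂ} (hmc : MapsTo φ (closedBall 0 1) (closedBall 0 1))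
    (hc : ContinuousOn φ (closedBall 0 1)) (hf : IsDiscAlg f) (hME : MeanErgodicDiscAlg φ) {c : ℂ}
    (h : ∀ z ∈ ball (0:ℂ) 1, Tendsto (fun k => f (φ^[k] z)) atTop (𝓝 c)) :
    ∀ y ∈ closedBall (0:ℂ) 1, Tendsto (fun n => cesaro φ f n y) atTop (𝓝 c) := by
  obtain ⟨g, hg⟩ := hME f hf
  have hgc : ContinuousOn g (closedBall 0 1) :=
    hg.continuousOn (Frequently.of_forall fun n => cesaro_cont hmc hc hf.1 n)
  have hgb : ∀ z ∈ ball (0:ℂ) 1, g z = c := fun z hz =>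
    tendsto_nhds_unique (hg.tendsto_at (ball_subset_closedBall hz)) (cesaro_tendsto (h z hz))
  intro y hy
  have hgy : g y = c := by
    have hcl : closure (ball (0:ℂ) 1) = closedBall 0 1 := closure_ball 0 one_ne_zero
    have : EqOn g (fun _ => c) (closure (ball (0:ℂ) 1)) := by
      apply EqOn.of_subset_closure (s := ball (0:ℂ) 1) (t := closure (ball (0:ℂ) 1)) hgb
      · rw [hcl]; exact hgc
      · exact continuousOn_const
      · exact subset_closure
      · exact subset_rfl
    exact this (by rw [hcl]; exact hy)
  rw [← hgy]
  exact hg.tendsto_at hy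

lemma cesaro_fixed {φ f : ℂ → ℂ} {z : ℂ} (h : φ z = z) {n : ℕ} (hn : n ≠ 0) :
    cesaro φ f n z = f z := by
  unfold cesaro
  have : ∀ m, φ^[m] z = z := fun m => Function.iterate_fixed h m
  simp only [this, Finset.sum_const, Nat.card_Icc]
  simp
  field_simp

/-- hyperbolic type contradiction -/
lemma hyp_false {φ : ℂ → ℂ} (hm : MapsTo φ (ball 0 1) (ball 0 1))
    (hmc : MapsTo φ (closedBall 0 1) (closedBall 0 1))
    (hc : ContinuousOn φ (closedBall 0 1)) (hME : MeanErgodicDiscAlg φ) {p q κ : ℂ}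
    (hpq : p ≠ q) (hq : ‖q‖ = 1) (hφq : φ q = q) (hκ : ‖κ‖ < 1)
    (h : ∀ z ∈ ball (0:ℂ) 1, (φ z - p) / (φ z - q) = κ * ((z - p) / (z - q))) : False := by
  have hid : IsDiscAlg (fun z => z) := ⟨continuousOn_id, differentiableOn_id⟩
  have key : ∀ z ∈ ball (0:ℂ) 1, Tendsto (fun k => φ^[k] z) atTop (𝓝 p) := by
    intro z hz
    have horb : ∀ k, φ^[k] z ∈ ball (0:ℂ) 1 := fun k => hm.iterate k hz
    have hnq : ∀ k, φ^[k] z - q ≠ 0 := by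
      intro k h0
      have := mem_ball_zero_iff.1 (horb k)
      rw [sub_eq_zero.1 h0, hq] at this
      exact lt_irrefl _ this
    have hu : ∀ k, (φ^[k] z - p) / (φ^[k] z - q) = κ ^ k * ((z - p) / (z - q)) := by
      intro k
      induction k with
      | zero => simp
      | succ k ih =>
        rw [Function.iterate_succ_apply', h _ (horb k), ih]; ring
    have hlim : Tendsto (fun k => 2 * (‖κ‖ ^ k * ‖(z - p) / (z - q)‖)) atTop (𝓝 0) := by
      have := ((tendsto_pow_atTop_nhds_zero_of_lt_one (norm_nonneg κ) hκ).mul_const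
        ‖(z - p) / (z - q)‖).const_mul 2
      simpa using this
    rw [tendsto_iff_norm_sub_tendsto_zero]
    apply squeeze_zero (fun _ => norm_nonneg _) _ hlim
    intro k
    have e : φ^[k] z - p = (κ ^ k * ((z - p) / (z - q))) * (φ^[k] z - q) := by
      rw [← hu k, div_mul_cancel₀ _ (hnq k)]
    rw [e, norm_mul, norm_mul, norm_pow]
    have : ‖φ^[k] z - q‖ ≤ 2 := by
      have h1 := norm_sub_le (φ^[k] z) q
      have h2 := mem_ball_zero_iff.1 (horb k)
      linarith
    have h3 : 0 ≤ ‖κ‖ ^ k * ‖(z - p) / (z - q)‖ := by positivity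
    nlinarith
  have hlim := me_limit hmc hc hid hME key q (mem_closedBall_zero_iff.2 hq.le)
  have : Tendsto (fun n => cesaro φ (fun z => z) n q) atTop (𝓝 q) := by
    apply tendsto_const_nhds.congr'
    filter_upwards [eventually_ne_atTop 0] with n hn
    rw [cesaro_fixed hφq hn]
  exact hpq (tendsto_nhds_unique hlim this)

lemma bad_card {K : ℕ} (S : Finset ℕ) (h : ∀ i ∈ S, ∀ j ∈ S, i ≤ j → j - i ≤ K) :
    S.card ≤ K + 1 := by
  rcases S.eq_empty_or_nonempty with rfl | hne
  · simp
  · have : S ⊆ Finset.Icc (S.min' hne) (S.min' hne + K) := by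
      intro j hj
      have h1 := S.min'_le j hj
      have h2 := h _ (S.min'_mem hne) j hj h1
      rw [Finset.mem_Icc]; omega
    have := Finset.card_le_card this
    rw [Nat.card_Icc] at this
    omega

/-- parabolic type implies mean ergodic -/
lemma par_me {φ : ℂ → ℂ} (hmc : MapsTo φ (closedBall 0 1) (closedBall 0 1)) {p β : ℂ}
    (hp : ‖p‖ = 1) (hφp : φ p = p) (hβ : β ≠ 0)
    (h : ∀ z ∈ closedBall (0:ℂ) 1, z ≠ p → φ z ≠ p ∧ (φ z - p)⁻¹ = (z - p)⁻¹ + β) :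
    MeanErgodicDiscAlg φ := by
  intro f hf
  refine ⟨fun _ => f p, ?_⟩
  have hpc : p ∈ closedBall (0:ℂ) 1 := mem_closedBall_zero_iff.2 hp.le
  rw [Metric.tendstoUniformlyOn_iff]
  intro ε hε
  obtain ⟨M, hM⟩ := (isCompact_closedBall (0:ℂ) 1).exists_bound_of_continuousOn hf.1
  have hM0 : 0 ≤ M := (norm_nonneg _).trans (hM p hpc)
  obtain ⟨δ, hδ, hδf⟩ := Metric.continuousOn_iff.1 hf.1 p hpc (ε / 2) (by positivity)
  have hβ' : 0 < ‖β‖ := norm_pos_iff.2 hβ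
  obtain ⟨K, hK⟩ := exists_nat_ge (2 * δ⁻¹ / ‖β‖)
  have hbad : ∀ z ∈ closedBall (0:ℂ) 1, ∀ n : ℕ,
      ((Finset.Icc 1 n).filter (fun m => δ ≤ ‖φ^[m] z - p‖)).card ≤ K + 1 := by
    intro z hz n
    by_cases hzp : z = p
    · have : ∀ m, φ^[m] z = p := fun m => by rw [hzp]; exact Function.iterate_fixed hφp m
      simp [this, not_le.2 hδ]
    have hor : ∀ m, φ^[m] z ≠ p ∧ (φ^[m] z - p)⁻¹ = (z - p)⁻¹ + m * β := by
      intro m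
      induction m with
      | zero => simpa using hzp
      | succ m ih =>
        obtain ⟨h1, h2⟩ := h _ (hmc.iterate m hz) ih.1
        rw [Function.iterate_succ_apply']
        refine ⟨h1, ?_⟩
        rw [h2, ih.2]; push_cast; ring
    apply bad_card
    intro i hi j hj hij
    have hb : ∀ m ∈ (Finset.Icc 1 n).filter (fun m => δ ≤ ‖φ^[m] z - p‖),
        ‖(z - p)⁻¹ + m * β‖ ≤ δ⁻¹ := by
      intro m hm
      rw [← (hor m).2, norm_inv]
      exact inv_anti₀ hδ (Finset.mem_filter.1 hm).2
    have h3 := norm_sub_le ((z - p)⁻¹ + j * β) ((z - p)⁻¹ + i * β)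
    have h4 : ((z - p)⁻¹ + j * β) - ((z - p)⁻¹ + i * β) = ((j - i : ℕ) : ℂ) * β := by
      push_cast [hij]; ring
    rw [h4, norm_mul, Complex.norm_natCast] at h3
    have h5 : ((j - i : ℕ) : ℝ) ≤ 2 * δ⁻¹ / ‖β‖ := by
      rw [le_div_iff₀ hβ']
      linarith [hb i hi, hb j hj]
    exact_mod_cast h5.trans hK
  obtain ⟨N, hN⟩ := exists_nat_gt ((K + 1) * (2 * M) / (ε / 2))
  filter_upwards [eventually_ge_atTop (N + 1)] with n hn z hz
  have hn0 : (0:ℝ) < n := by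
    have : 0 < n := by omega
    exact_mod_cast this
  have hn0' : (n:ℂ) ≠ 0 := by exact_mod_cast hn0.ne'
  have e : cesaro φ f n z - f p = (n : ℂ)⁻¹ * ∑ m ∈ Finset.Icc 1 n, (f (φ^[m] z) - f p) := by
    unfold cesaro
    rw [Finset.sum_sub_distrib, Finset.sum_const, Nat.card_Icc]
    simp
    field_simp
  rw [dist_comm, dist_eq_norm, e, norm_mul, norm_inv, Complex.norm_natCast]
  have hs : ‖∑ m ∈ Finset.Icc 1 n, (f (φ^[m] z) - f p)‖ ≤ n * (ε / 2) + (K + 1) * (2 * M) := by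
    calc _ ≤ ∑ m ∈ Finset.Icc 1 n, ‖f (φ^[m] z) - f p‖ := norm_sum_le _ _
      _ ≤ ∑ m ∈ Finset.Icc 1 n, (ε / 2 + if δ ≤ ‖φ^[m] z - p‖ then 2 * M else 0) := by
        apply Finset.sum_le_sum
        intro m _
        have hmz := hmc.iterate m hz
        split_ifs with hh
        · have := norm_sub_le (f (φ^[m] z)) (f p)
          linarith [hM _ hmz, hM _ hpc]
        · have := hδf _ hmz (by rw [dist_eq_norm]; exact not_le.1 hh)
          rw [dist_eq_norm] at this
          linarith
      _ ≤ _ := by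
        rw [Finset.sum_add_distrib, Finset.sum_const, Nat.card_Icc, ← Finset.sum_filter,
          Finset.sum_const]
        have := hbad z hz n
        have h6 : (((Finset.Icc 1 n).filter (fun m => δ ≤ ‖φ^[m] z - p‖)).card : ℝ) ≤ K + 1 := by
          exact_mod_cast this
        simp only [nsmul_eq_mul, Nat.add_sub_cancel]
        gcongr
  rw [inv_mul_lt_iff₀ hn0]
  have h7 : (N:ℝ) < n := by exact_mod_cast hn
  rw [div_lt_iff₀ (by positivity)] at hN
  nlinarith

lemma fbp_maps {φ : ℂ → ℂ} {n : ℕ} (hn : 1 ≤ n) {c : ℂ} (hc : ‖c‖ = 1) {a : Fin n → ℂ}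
    (ha : ∀ i, ‖a i‖ < 1) (hφ : ∀ z ∈ closedBall (0:ℂ) 1, φ z = c * ∏ i, bl (a i) z) :
    MapsTo φ (ball 0 1) (ball 0 1) := by
  intro z hz
  rw [hφ z (ball_subset_closedBall hz)]
  rw [mem_ball_zero_iff] at *
  rw [norm_mul, hc, one_mul, norm_prod]
  have : Nonempty (Fin n) := ⟨⟨0, hn⟩⟩
  by_cases h0 : ∃ i, bl (a i) z = 0
  · obtain ⟨i, hi⟩ := h0
    rw [Finset.prod_eq_zero (Finset.mem_univ i) (by rw [hi, norm_zero])]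
    exact one_pos
  · push Not at h0
    calc ∏ i, ‖bl (a i) z‖ < ∏ _i : Fin n, (1:ℝ) :=
        Finset.prod_lt_prod_of_nonempty (fun i _ => norm_pos_iff.2 (h0 i))
          (fun i _ => bl_lt (ha i) hz) Finset.univ_nonempty
      _ = 1 := by simp

lemma fbp_mapsc {φ : ℂ → ℂ} {n : ℕ} {c : ℂ} (hc : ‖c‖ = 1) {a : Fin n → ℂ}
    (ha : ∀ i, ‖a i‖ < 1) (hφ : ∀ z ∈ closedBall (0:ℂ) 1, φ z = c * ∏ i, bl (a i) z) :
    MapsTo φ (closedBall 0 1) (closedBall 0 1) := by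
  intro z hz
  rw [hφ z hz]
  rw [mem_closedBall_zero_iff] at *
  rw [norm_mul, hc, one_mul, norm_prod]
  exact Finset.prod_le_one (fun i _ => norm_nonneg _) (fun i _ => bl_le (ha i) hz)

lemma fbp_cont {φ : ℂ → ℂ} {n : ℕ} {c : ℂ} {a : Fin n → ℂ}
    (ha : ∀ i, ‖a i‖ < 1) (hφ : ∀ z ∈ closedBall (0:ℂ) 1, φ z = c * ∏ i, bl (a i) z) :
    ContinuousOn φ (closedBall 0 1) := by
  refine ContinuousOn.congr ?_ hφ
  apply continuousOn_const.mul
  apply continuousOn_finsetProd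
  intro i _ z hz
  exact (bl_contAt (ha i) (mem_closedBall_zero_iff.1 hz)).continuousWithinAt

lemma fbp_diff {φ : ℂ → ℂ} {n : ℕ} {c : ℂ} {a : Fin n → ℂ}
    (ha : ∀ i, ‖a i‖ < 1) (hφ : ∀ z ∈ closedBall (0:ℂ) 1, φ z = c * ∏ i, bl (a i) z) :
    DifferentiableOn ℂ φ (ball 0 1) := by
  refine DifferentiableOn.congr ?_ (fun z hz => hφ z (ball_subset_closedBall hz))
  apply DifferentiableOn.const_mul
  apply DifferentiableOn.fun_finsetProd
  intro i _
  exact bl_diff (ha i)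

/-- an automorphism has one factor only -/
lemma fbp_auto_one {φ : ℂ → ℂ} {n : ℕ} (hn : 1 ≤ n) {c : ℂ} {a : Fin n → ℂ}
    (ha : ∀ i, ‖a i‖ < 1) (hφ : ∀ z ∈ closedBall (0:ℂ) 1, φ z = c * ∏ i, bl (a i) z)
    (hA : IsDiscAutomorphism φ) : n = 1 := by
  obtain ⟨_, _, ψ, hψd, _, hψφ, _⟩ := hA
  by_contra hn1
  have hmem : ∀ i, a i ∈ ball (0:ℂ) 1 := fun i => mem_ball_zero_iff.2 (ha i)
  have hz : ∀ i, φ (a i) = 0 := by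
    intro i
    rw [hφ _ (ball_subset_closedBall (hmem i)),
      Finset.prod_eq_zero (Finset.mem_univ i) (bl_self _), mul_zero]
  set α := a ⟨0, hn⟩ with hα
  have hall : ∀ i, a i = α := by
    intro i
    rw [← hψφ _ (hmem i), hz i, ← hz ⟨0, hn⟩, hψφ _ (hmem _)]
  have hαb : α ∈ ball (0:ℂ) 1 := hmem _
  have hev : φ =ᶠ[𝓝 α] fun z => c * (bl α z) ^ n := by
    filter_upwards [isOpen_ball.mem_nhds hαb] with z hz
    rw [hφ z (ball_subset_closedBall hz)]
    simp [hall]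
  have hbd : DifferentiableAt ℂ (bl α) α :=
    (bl_diff (ha _)).differentiableAt (isOpen_ball.mem_nhds hαb)
  have hφd : HasDerivAt φ 0 α := by
    have h := (hbd.hasDerivAt.pow n).const_mul c
    rw [bl_self, zero_pow (by omega)] at h
    simp only [mul_zero, zero_mul] at h
    exact h.congr_of_eventuallyEq hev
  have h0 : φ α = 0 := hz _
  have hψ : HasDerivAt ψ (deriv ψ (φ α)) (φ α) := by
    rw [h0]
    exact (hψd.differentiableAt (isOpen_ball.mem_nhds (by simp))).hasDerivAt
  have hcomp := hψ.comp α hφd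
  have hid : HasDerivAt (ψ ∘ φ) 1 α := by
    apply (hasDerivAt_id α).congr_of_eventuallyEq
    filter_upwards [isOpen_ball.mem_nhds hαb] with z hz
    exact hψφ z hz
  have := hid.unique hcomp
  simp at this

lemma mob_auto {φ : ℂ → ℂ} {c a : ℂ} (hc : ‖c‖ = 1) (ha : ‖a‖ < 1)
    (hφ : ∀ z ∈ closedBall (0:ℂ) 1, φ z = c * bl a z) : IsDiscAutomorphism φ := by
  have hc0 : c ≠ 0 := by intro h; simp [h] at hc
  have ha' : ‖-a‖ < 1 := by simpa using ha
  have hcm : MapsTo (fun z => c⁻¹ * z) (ball (0:ℂ) 1) (ball 0 1) := by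
    intro z hz
    rw [mem_ball_zero_iff] at *
    simpa [hc] using hz
  refine ⟨?_, ?_, fun z => bl (-a) (c⁻¹ * z), ?_, ?_, ?_, ?_⟩
  · exact ((bl_diff ha).const_mul c).congr fun z hz => hφ z (ball_subset_closedBall hz)
  · intro z hz
    rw [hφ z (ball_subset_closedBall hz), mem_ball_zero_iff, norm_mul, hc, one_mul]
    exact bl_lt ha (mem_ball_zero_iff.1 hz)
  · exact (bl_diff ha').comp (by fun_prop) hcm
  · exact (bl_maps ha').comp hcm
  · intro z hz
    simp only
    rw [hφ z (ball_subset_closedBall hz), inv_mul_cancel_left₀ hc0,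
      bl_inv ha (mem_ball_zero_iff.1 hz).le]
  · intro z hz
    have h1 := bl_maps ha' (hcm hz)
    have h2 := bl_inv ha' (mem_ball_zero_iff.1 (hcm hz)).le
    rw [neg_neg] at h2
    simp only at h1 h2 ⊢
    rw [hφ _ (ball_subset_closedBall h1), h2, mul_inv_cancel_left₀ hc0]

/-- the two fixed points of a Moebius map -/
lemma mob_roots {c a : ℂ} (hc : ‖c‖ = 1) (ha0 : a ≠ 0) :
    ∃ p q : ℂ, (starRingEnd ℂ) a * (p + q) = 1 - c ∧ (starRingEnd ℂ) a * (p * q) = -(c * a) ∧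
      ‖p‖ * ‖q‖ = 1 ∧ ‖p‖ ≤ 1 := by
  set b := (starRingEnd ℂ) a with hb
  have hb0 : b ≠ 0 := by simpa [hb] using ha0
  obtain ⟨s, hs⟩ := IsAlgClosed.exists_eq_mul_self (discrim b (c - 1) (-(c * a)))
  obtain ⟨p, hp⟩ := exists_quadratic_eq_zero hb0 ⟨s, hs⟩
  obtain ⟨q, hq⟩ : ∃ q, q = (1 - c) / b - p := ⟨_, rfl⟩
  have h1 : b * (p + q) = 1 - c := by rw [hq]; field_simp; ring
  have h2 : b * (p * q) = -(c * a) := by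
    linear_combination p * h1 - hp
  have hbn : ‖b‖ = ‖a‖ := RCLike.norm_conj a
  have h3 : ‖p‖ * ‖q‖ = 1 := by
    have h4 := congrArg norm h2
    rw [norm_neg, norm_mul, norm_mul, norm_mul, hc, one_mul, hbn] at h4
    exact mul_left_cancel₀ (norm_ne_zero_iff.2 ha0) (h4.trans (mul_one _).symm)
  by_cases h5 : ‖p‖ ≤ 1
  · exact ⟨p, q, h1, h2, h3, h5⟩
  · refine ⟨q, p, by rw [← h1]; ring, by rw [← h2]; ring, by rw [← h3]; ring, ?_⟩
    by_contra h6
    push Not at h5 h6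
    nlinarith

lemma mob_sub {c a p q z w : ℂ} (hden : 1 - z * (starRingEnd ℂ) a ≠ 0)
    (h1 : (starRingEnd ℂ) a * (p + q) = 1 - c) (h2 : (starRingEnd ℂ) a * (p * q) = -(c * a))
    (hw : w = c * bl a z) :
    w - p = (1 - q * (starRingEnd ℂ) a) * (z - p) / (1 - z * (starRingEnd ℂ) a) := by
  have h : bl a z * (1 - z * (starRingEnd ℂ) a) = z - a := div_mul_cancel₀ _ hden
  rw [eq_div_iff hden, hw]
  linear_combination c * h + z * h1 - h2

lemma mob_fix {c a p q z : ℂ} (hden : 1 - z * (starRingEnd ℂ) a ≠ 0) (ha0 : a ≠ 0)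
    (h1 : (starRingEnd ℂ) a * (p + q) = 1 - c) (h2 : (starRingEnd ℂ) a * (p * q) = -(c * a)) :
    c * bl a z = z ↔ z = p ∨ z = q := by
  have h : bl a z * (1 - z * (starRingEnd ℂ) a) = z - a := div_mul_cancel₀ _ hden
  have hb0 : (starRingEnd ℂ) a ≠ 0 := by simpa using ha0
  have key : (c * bl a z - z) * (1 - z * (starRingEnd ℂ) a) =
      (starRingEnd ℂ) a * ((z - p) * (z - q)) := by
    linear_combination c * h + z * h1 - h2
  constructor
  · intro hz
    rw [hz, sub_self, zero_mul] at key
    rcases mul_eq_zero.1 ((mul_eq_zero.1 key.symm).resolve_left hb0) with h | h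
    · exact Or.inl (sub_eq_zero.1 h)
    · exact Or.inr (sub_eq_zero.1 h)
  · intro hz
    have : (z - p) * (z - q) = 0 := by
      rcases hz with rfl | rfl <;> simp
    rw [this, mul_zero] at key
    exact sub_eq_zero.1 ((mul_eq_zero.1 key).resolve_right hden)

/-- parabolic Moebius maps are mean ergodic -/
lemma mob_par {φ : ℂ → ℂ} {c a : ℂ} (hc : ‖c‖ = 1) (ha : ‖a‖ < 1)
    (hφ : ∀ z ∈ closedBall (0:ℂ) 1, φ z = c * bl a z)
    (hmc : MapsTo φ (closedBall 0 1) (closedBall 0 1))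
    (hP : IsParabolicAutomorphism φ) : MeanErgodicDiscAlg φ := by
  obtain ⟨_, p₀, hp₀, _, hu⟩ := hP
  have hcl : ∀ {y : ℂ}, ‖y‖ ≤ 1 → y ∈ closedBall (0:ℂ) 1 := fun h => mem_closedBall_zero_iff.2 h
  have ha0 : a ≠ 0 := by
    rintro rfl
    have : (0:ℂ) = p₀ := hu 0 (by simp) (by rw [hφ 0 (by simp)]; simp [bl])
    rw [← this] at hp₀; simp at hp₀
  obtain ⟨p, q, h1, h2, hpq, hp⟩ := mob_roots hc ha0
  have hpf : φ p = p := by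
    rw [hφ p (hcl hp)]; exact (mob_fix (den_ne ha hp) ha0 h1 h2).2 (Or.inl rfl)
  have hpp : p = p₀ := hu p (hcl hp) hpf
  have hp1 : ‖p‖ = 1 := by rw [hpp, hp₀]
  have hq1 : ‖q‖ = 1 := by rwa [hp1, one_mul] at hpq
  have hqf : φ q = q := by
    rw [hφ q (hcl hq1.le)]; exact (mob_fix (den_ne ha hq1.le) ha0 h1 h2).2 (Or.inr rfl)
  have hqp : q = p := (hu q (hcl hq1.le) hqf).trans hpp.symm
  subst hqp
  have hs := den_ne ha hp
  refine par_me hmc hp1 hpf (β := -(starRingEnd ℂ) a / (1 - q * (starRingEnd ℂ) a))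
    (div_ne_zero (by simpa using ha0) hs) ?_
  intro z hz hzq
  have hz0 := sub_ne_zero.2 hzq
  have hden := den_ne ha (mem_closedBall_zero_iff.1 hz)
  have e := mob_sub hden h1 h2 (hφ z hz)
  refine ⟨fun h => ?_, ?_⟩
  · rw [h, sub_self] at e
    exact (div_ne_zero (mul_ne_zero hs hz0) hden) e.symm
  · rw [e]
    field_simp
    ring

/-- mean ergodic non-elliptic Moebius maps are parabolic -/
lemma mob_me {φ : ℂ → ℂ} {c a : ℂ} (hc : ‖c‖ = 1) (ha : ‖a‖ < 1)
    (hφ : ∀ z ∈ closedBall (0:ℂ) 1, φ z = c * bl a z)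
    (hm : MapsTo φ (ball 0 1) (ball 0 1))
    (hmc : MapsTo φ (closedBall 0 1) (closedBall 0 1))
    (hcont : ContinuousOn φ (closedBall 0 1))
    (hne : ¬ IsEllipticAutomorphism φ)
    (hME : MeanErgodicDiscAlg φ) : IsParabolicAutomorphism φ := by
  have hA := mob_auto hc ha hφ
  have hcl : ∀ {y : ℂ}, ‖y‖ ≤ 1 → y ∈ closedBall (0:ℂ) 1 := fun h => mem_closedBall_zero_iff.2 h
  have ha0 : a ≠ 0 := by
    rintro rfl
    exact hne ⟨hA, 0, by simp, by rw [hφ 0 (by simp)]; simp [bl]⟩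
  obtain ⟨p, q, h1, h2, hpq, hp⟩ := mob_roots hc ha0
  have hfix : ∀ z ∈ closedBall (0:ℂ) 1, φ z = z ↔ z = p ∨ z = q := by
    intro z hz
    rw [hφ z hz]; exact mob_fix (den_ne ha (mem_closedBall_zero_iff.1 hz)) ha0 h1 h2
  have hpf : φ p = p := (hfix p (hcl hp)).2 (Or.inl rfl)
  have hp1 : ‖p‖ = 1 := by
    by_contra h
    exact hne ⟨hA, p, mem_ball_zero_iff.2 (lt_of_le_of_ne hp h), hpf⟩
  have hq1 : ‖q‖ = 1 := by rwa [hp1, one_mul] at hpq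
  have hqf : φ q = q := (hfix q (hcl hq1.le)).2 (Or.inr rfl)
  by_cases hpq' : p = q
  · refine ⟨hA, p, hp1, hpf, fun z hz h => ?_⟩
    rcases (hfix z hz).1 h with h | h
    · exact h
    · exact h.trans hpq'.symm
  exfalso
  set s := 1 - p * (starRingEnd ℂ) a with hs
  set t := 1 - q * (starRingEnd ℂ) a with ht
  have hs0 : s ≠ 0 := den_ne ha hp
  have ht0 : t ≠ 0 := den_ne ha hq1.le
  have rel1 : ∀ z ∈ ball (0:ℂ) 1, (φ z - p) / (φ z - q) = (t / s) * ((z - p) / (z - q)) := by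
    intro z hz
    have hzc := ball_subset_closedBall hz
    have hden := den_ne ha (mem_closedBall_zero_iff.1 hzc)
    rw [mob_sub hden h1 h2 (hφ z hzc), mob_sub (p := q) (q := p) hden (by rw [← h1]; ring)
      (by rw [← h2]; ring) (hφ z hzc), div_div_div_cancel_right₀ hden, mul_div_mul_comm]
  have rel2 : ∀ z ∈ ball (0:ℂ) 1, (φ z - q) / (φ z - p) = (s / t) * ((z - q) / (z - p)) := by
    intro z hz
    rw [← inv_div, rel1 z hz, mul_inv, inv_div, inv_div]
  rcases lt_trichotomy ‖t‖ ‖s‖ with h | h | h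
  · refine hyp_false hm hmc hcont hME hpq' hq1 hqf (κ := t / s) ?_ rel1
    rw [norm_div, div_lt_one (norm_pos_iff.2 hs0)]; exact h
  · have hcs : ∀ x : ℂ, ‖x‖ = 1 → φ x = x → c * (starRingEnd ℂ) (1 - x * (starRingEnd ℂ) a)
        = 1 - x * (starRingEnd ℂ) a := by
      intro x hx hfx
      have hden := den_ne ha hx.le
      have h3 : bl a x * (1 - x * (starRingEnd ℂ) a) = x - a := div_mul_cancel₀ _ hden
      rw [hφ x (hcl hx.le)] at hfx
      have hxx : x * (starRingEnd ℂ) x = 1 := by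
        rw [Complex.mul_conj, Complex.normSq_eq_norm_sq, hx]; simp
      have hx0 : x ≠ 0 := by intro h; simp [h] at hx
      simp only [map_sub, map_one, map_mul, Complex.conj_conj]
      apply mul_left_cancel₀ hx0
      linear_combination -c * a * hxx - c * h3 + (1 - x * (starRingEnd ℂ) a) * hfx
    have e1 : c * (starRingEnd ℂ) s = s := hcs p hp1 hpf
    have e2 : c * (starRingEnd ℂ) t = t := hcs q hq1 hqf
    have e3 : s * (starRingEnd ℂ) s = t * (starRingEnd ℂ) t := by
      rw [Complex.mul_conj, Complex.mul_conj, Complex.normSq_eq_norm_sq, Complex.normSq_eq_norm_sq,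
        h]
    have e4 : (s - t) * (starRingEnd ℂ) (s + t) = 0 := by
      rw [map_add]
      linear_combination e3 - (starRingEnd ℂ) t * e1 + (starRingEnd ℂ) s * e2
    have hre : ∀ x : ℂ, ‖x‖ = 1 → 0 < (1 - x * (starRingEnd ℂ) a).re := by
      intro x hx
      have h4 := Complex.re_le_norm (x * (starRingEnd ℂ) a)
      rw [norm_mul, hx, one_mul, RCLike.norm_conj] at h4
      simp only [Complex.sub_re, Complex.one_re]
      linarith
    rcases mul_eq_zero.1 e4 with h5 | h5
    · have : (q - p) * (starRingEnd ℂ) a = 0 := by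
        rw [← h5, hs, ht]; ring
      rcases mul_eq_zero.1 this with h6 | h6
      · exact hpq' (sub_eq_zero.1 h6).symm
      · exact ha0 (by simpa using h6)
    · have h6 : s + t = 0 := by
        rw [← Complex.conj_conj (s + t), h5, map_zero]
      have h7 := congrArg Complex.re h6
      have h8 := hre p hp1
      have h9 := hre q hq1
      simp only [Complex.add_re, Complex.zero_re] at h7
      linarith
  · refine hyp_false hm hmc hcont hME (Ne.symm hpq') hp1 hpf (κ := s / t) ?_ rel2
    rw [norm_div, div_lt_one (norm_pos_iff.2 ht0)]; exact h

lemma bl_circle {a : ℂ} (ha : ‖a‖ < 1) (t : ℝ) : bl a (Complex.exp (t * I)) =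
    Complex.exp (((t - 2 * Complex.arg (1 - Complex.exp (t * I) * (starRingEnd ℂ) a) : ℝ) : ℂ) * I)
    := by
  set e := Complex.exp (t * I) with he
  have hen : ‖e‖ = 1 := Complex.norm_exp_ofReal_mul_I t
  set s := 1 - e * (starRingEnd ℂ) a with hs
  have hs0 : s ≠ 0 := den_ne ha hen.le
  have hee : e * (starRingEnd ℂ) e = 1 := by
    rw [Complex.mul_conj, Complex.normSq_eq_norm_sq, hen]; simp
  have h1 : e - a = e * (starRingEnd ℂ) s := by
    rw [hs]
    simp only [map_sub, map_one, map_mul, Complex.conj_conj]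
    linear_combination a * hee
  have h2 : s = ‖s‖ * Complex.exp (s.arg * I) := (Complex.norm_mul_exp_arg_mul_I s).symm
  have h3 : (starRingEnd ℂ) s = ‖s‖ * Complex.exp (-(s.arg * I)) := by
    conv_lhs => rw [h2]
    rw [map_mul, Complex.conj_ofReal, ← Complex.exp_conj]
    simp
  have hn0 : (‖s‖ : ℂ) ≠ 0 := by exact_mod_cast norm_ne_zero_iff.2 hs0
  have e0 : bl a e = (e - a) / s := rfl
  rw [e0, div_eq_iff hs0, h1, h3]
  conv_rhs => rw [h2]
  have h4 : Complex.exp (((t - 2 * s.arg : ℝ) : ℂ) * I) * Complex.exp (s.arg * I)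
      = e * Complex.exp (-(s.arg * I)) := by
    rw [he, ← Complex.exp_add, ← Complex.exp_add]
    congr 1
    push_cast
    ring
  rw [show Complex.exp (((t - 2 * (↑‖s‖ * Complex.exp (s.arg * I)).arg : ℝ) : ℂ) * I)
    = Complex.exp (((t - 2 * s.arg : ℝ) : ℂ) * I) by rw [← h2]]
  linear_combination (-(‖s‖ : ℂ)) * h4

/-- A lift of the circle map. -/
def lft {n : ℕ} (θ : ℝ) (a : Fin n → ℂ) (t : ℝ) : ℝ :=
  θ + ∑ i, (t - 2 * Complex.arg (1 - Complex.exp (t * I) * (starRingEnd ℂ) (a i)))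

lemma lft_exp {φ : ℂ → ℂ} {n : ℕ} {θ : ℝ} {a : Fin n → ℂ} (ha : ∀ i, ‖a i‖ < 1)
    (hφ : ∀ z ∈ closedBall (0:ℂ) 1, φ z = Complex.exp (θ * I) * ∏ i, bl (a i) z) (t : ℝ) :
    φ (Complex.exp (t * I)) = Complex.exp (lft θ a t * I) := by
  rw [hφ _ (mem_closedBall_zero_iff.2 (Complex.norm_exp_ofReal_mul_I t).le)]
  simp only [fun i => bl_circle (ha i) t]
  rw [← Complex.exp_sum, ← Complex.exp_add]
  congr 1
  unfold lft
  push_cast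
  rw [add_mul, Finset.sum_mul]

lemma lft_cont {n : ℕ} {θ : ℝ} {a : Fin n → ℂ} (ha : ∀ i, ‖a i‖ < 1) :
    Continuous (lft θ a) := by
  unfold lft
  apply continuous_const.add
  apply continuous_finsetSum
  intro i _
  apply continuous_id.sub
  apply continuous_const.mul
  rw [continuous_iff_continuousAt]
  intro t
  have hs : 1 - Complex.exp (t * I) * (starRingEnd ℂ) (a i) ∈ Complex.slitPlane := by
    left
    have h4 := Complex.re_le_norm (Complex.exp (t * I) * (starRingEnd ℂ) (a i))
    rw [norm_mul, Complex.norm_exp_ofReal_mul_I, one_mul, RCLike.norm_conj] at h4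
    simp only [Complex.sub_re, Complex.one_re]
    linarith [ha i]
  exact (Complex.continuousAt_arg hs).comp (f := fun t : ℝ =>
    1 - Complex.exp (t * I) * (starRingEnd ℂ) (a i)) (by fun_prop)

lemma lft_per {n : ℕ} (θ : ℝ) (a : Fin n → ℂ) (t : ℝ) (k : ℕ) :
    lft θ a (t + k * (2 * Real.pi)) = lft θ a t + ((n * k : ℕ) : ℝ) * (2 * Real.pi) := by
  have h : Complex.exp (((t + k * (2 * Real.pi) : ℝ) : ℂ) * I) = Complex.exp (t * I) := by
    rw [Complex.exp_eq_exp_iff_exists_int]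
    refine ⟨k, ?_⟩
    push_cast
    ring
  unfold lft
  rw [h]
  simp only [Finset.sum_sub_distrib, Finset.sum_const, Finset.card_univ, Fintype.card_fin,
    nsmul_eq_mul]
  push_cast
  ring

/-- There is a point of period exactly three. -/
lemma exists_period {φ : ℂ → ℂ} {n : ℕ} (hn : 2 ≤ n) {θ : ℝ} {a : Fin n → ℂ}
    (ha : ∀ i, ‖a i‖ < 1)
    (hφ : ∀ z ∈ closedBall (0:ℂ) 1, φ z = Complex.exp (θ * I) * ∏ i, bl (a i) z)
    (S : Finset ℂ) (hS : S.card ≤ n + 1) (hfix : ∀ z, ‖z‖ = 1 → φ z = z → z ∈ S) :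
    ∃ y : ℂ, ‖y‖ = 1 ∧ φ (φ (φ y)) = y ∧ φ y ≠ y := by
  by_contra hcon
  push Not at hcon
  set F := lft θ a with hF
  have hFc : Continuous F := lft_cont ha
  set G : ℝ → ℝ := fun t => F (F (F t)) - t with hG
  have hGc : Continuous G := by fun_prop
  have hpi : 0 < 2 * Real.pi := by positivity
  have hG2 : G (2 * Real.pi) = G 0 + ((n ^ 3 - 1 : ℕ) : ℝ) * (2 * Real.pi) := by
    have h1 := lft_per θ a 0 1
    have h2 := lft_per θ a (F 0) (n * 1)
    have h3 := lft_per θ a (F (F 0)) (n * (n * 1))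
    simp only [zero_add, Nat.cast_one, one_mul] at h1
    rw [← hF] at h1 h2 h3
    simp only [hG]
    rw [h1, h2, h3]
    have : 1 ≤ n ^ 3 := Nat.one_le_pow _ _ (by omega)
    push_cast [this]
    ring
  set j0 : ℤ := ⌈G 0 / (2 * Real.pi)⌉ with hj0
  have hj1 : G 0 ≤ j0 * (2 * Real.pi) := by
    rw [← div_le_iff₀ hpi]; exact Int.le_ceil _
  have hj2 : j0 * (2 * Real.pi) < G 0 + 2 * Real.pi := by
    have := Int.ceil_lt_add_one (G 0 / (2 * Real.pi))
    rw [← hj0] at this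
    have h := mul_lt_mul_of_pos_right this hpi
    rw [add_mul, div_mul_cancel₀ _ hpi.ne'] at h
    linarith
  have hex : ∀ j : Fin (n ^ 3 - 1), ∃ t ∈ Ico 0 (2 * Real.pi), G t = (j0 + (j : ℕ)) * (2 * Real.pi)
      := by
    intro j
    have := intermediate_value_Ico hpi.le hGc.continuousOn (f := G)
    have hmem : (j0 + ((j : ℕ) : ℝ)) * (2 * Real.pi) ∈ Ico (G 0) (G (2 * Real.pi)) := by
      have hj : ((j : ℕ) : ℝ) + 1 ≤ ((n ^ 3 - 1 : ℕ) : ℝ) := by exact_mod_cast j.2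
      constructor
      · have : 0 ≤ ((j : ℕ) : ℝ) * (2 * Real.pi) := by positivity
        linarith
      · rw [hG2]
        have := mul_le_mul_of_nonneg_right hj hpi.le
        linarith
    obtain ⟨t, ht, hGt⟩ := this hmem
    exact ⟨t, ht, hGt⟩
  choose T hT hGT using hex
  set Y : Fin (n ^ 3 - 1) → ℂ := fun j => Complex.exp (T j * I) with hY
  have hinj : Function.Injective Y := by
    intro i j hij
    obtain ⟨m, hm⟩ := Complex.exp_eq_exp_iff_exists_int.1 hij
    have hm' : T i = T j + m * (2 * Real.pi) := by
      have h1 : ((T i : ℝ) : ℂ) = T j + m * (2 * Real.pi) := by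
        apply mul_right_cancel₀ Complex.I_ne_zero
        rw [hm]; ring
      exact_mod_cast h1
    have hi := hT i
    have hj := hT j
    have hm0 : m = 0 := by
      have h1 : (m:ℝ) < 1 := by
        by_contra h; push Not at h
        nlinarith [hi.2, hj.1]
      have h2 : (-1:ℝ) < m := by
        by_contra h; push Not at h
        nlinarith [hi.1, hj.2]
      have h3 : m < 1 := by exact_mod_cast h1
      have h4 : -1 < m := by exact_mod_cast h2
      omega
    have hTT : T i = T j := by rw [hm', hm0]; simp
    have := hGT i
    rw [hTT, hGT j] at this
    have h5 := mul_right_cancel₀ hpi.ne' this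
    have h6 : ((j : ℕ) : ℝ) = (i : ℕ) := by linarith
    exact Fin.ext (by exact_mod_cast h6.symm)
  have hYS : ∀ j, Y j ∈ S := by
    intro j
    have hn1 : ‖Y j‖ = 1 := Complex.norm_exp_ofReal_mul_I _
    apply hfix _ hn1
    apply hcon _ hn1
    simp only [hY, lft_exp ha hφ]
    rw [Complex.exp_eq_exp_iff_exists_int]
    refine ⟨j0 + (j : ℕ), ?_⟩
    have h1 : F (F (F (T j))) = T j + (j0 + (j : ℕ)) * (2 * Real.pi) := by
      have := hGT j
      simp only [hG] at this
      linarith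
    rw [← hF, h1]
    push_cast
    ring
  have hcard : n ^ 3 - 1 ≤ S.card := by
    have := Finset.card_le_card_of_injOn (s := Finset.univ) Y (fun j _ => hYS j)
      (hinj.injOn)
    simpa using this
  have : n + 2 < n ^ 3 := by nlinarith [Nat.pow_le_pow_left hn 2]
  omega

open Polynomial in
/-- The polynomial whose roots are the fixed points. -/
def fixPoly {n : ℕ} (c : ℂ) (a : Fin n → ℂ) : ℂ[X] :=
  C c * ∏ i, (X - C (a i)) - X * ∏ i, (1 - X * C ((starRingEnd ℂ) (a i)))

open Polynomial in
lemma fixPoly_deg {n : ℕ} (c : ℂ) (a : Fin n → ℂ) : (fixPoly c a).natDegree ≤ n + 1 := by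
  unfold fixPoly
  refine (natDegree_sub_le_of_le (m := n) (n := n + 1) ?_ ?_).trans (by simp)
  · refine (natDegree_C_mul_le _ _).trans ((natDegree_prod_le _ _).trans ?_)
    refine (Finset.sum_le_card_nsmul _ _ 1 fun i _ => ?_).trans ?_
    · simp
    · simp
  · refine (natDegree_mul_le).trans ?_
    have h : (∏ i, (1 - X * C ((starRingEnd ℂ) (a i)))).natDegree ≤ n := by
      refine (natDegree_prod_le _ _).trans ((Finset.sum_le_card_nsmul _ _ 1 fun i _ => ?_).trans ?_)
      · refine (natDegree_sub_le_of_le (m := 0) (n := 1) (by simp) ?_).trans (by simp)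
        refine natDegree_mul_le.trans ?_
        simp
      · simp
    have : (X : ℂ[X]).natDegree ≤ 1 := natDegree_X_le
    omega

lemma fixPoly_eval {n : ℕ} {c : ℂ} {a : Fin n → ℂ} (ha : ∀ i, ‖a i‖ < 1) {z : ℂ} (hz : ‖z‖ ≤ 1) :
    (fixPoly c a).eval z = 0 ↔ c * ∏ i, bl (a i) z = z := by
  have hQ : ∏ i, (1 - z * (starRingEnd ℂ) (a i)) ≠ 0 :=
    Finset.prod_ne_zero_iff.2 fun i _ => den_ne (ha i) hz
  unfold fixPoly bl
  rw [Finset.prod_div_distrib, mul_div_assoc', div_eq_iff hQ]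
  simp [Polynomial.eval_prod, sub_eq_zero, -Polynomial.X_mul_C]

lemma sum_period {u : ℕ → ℂ} {v : ℂ} (h1 : ∀ k, u (3 * k + 1) = 0) (h2 : ∀ k, u (3 * k + 2) = 0)
    (h3 : ∀ k, u (3 * k + 3) = v) (k : ℕ) : ∑ m ∈ Finset.Icc 1 (3 * k), u m = k * v := by
  induction k with
  | zero => simp
  | succ k ih =>
    rw [show 3 * (k + 1) = 3 * k + 1 + 1 + 1 by ring, Finset.sum_Icc_succ_top (by omega),
      Finset.sum_Icc_succ_top (by omega), Finset.sum_Icc_succ_top (by omega), ih, h1,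
      show 3 * k + 1 + 1 = 3 * k + 2 by ring, h2, h3]
    push_cast; ring

lemma high_false {φ : ℂ → ℂ} {n : ℕ} (hn : 2 ≤ n) {θ : ℝ} {a : Fin n → ℂ}
    (ha : ∀ i, ‖a i‖ < 1)
    (hφ : ∀ z ∈ closedBall (0:ℂ) 1, φ z = Complex.exp (θ * I) * ∏ i, bl (a i) z)
    (hME : MeanErgodicDiscAlg φ) : False := by
  have hc1 : ‖Complex.exp (θ * I)‖ = 1 := Complex.norm_exp_ofReal_mul_I θ
  have hm := fbp_maps (by omega) hc1 ha hφ
  have hmc := fbp_mapsc hc1 ha hφ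
  have hcont := fbp_cont ha hφ
  have hd := fbp_diff ha hφ
  have hna : ¬ IsDiscAutomorphism φ := by
    intro hA
    have := fbp_auto_one (by omega) ha hφ hA
    omega
  set P := fixPoly (Complex.exp (θ * I)) a with hP
  have hfix : ∀ z : ℂ, ‖z‖ ≤ 1 → (P.eval z = 0 ↔ φ z = z) := by
    intro z hz
    rw [hφ z (mem_closedBall_zero_iff.2 hz)]
    exact fixPoly_eval ha hz
  have hP0 : P ≠ 0 := by
    intro h0
    apply hna
    have hid : ∀ z ∈ ball (0:ℂ) 1, φ z = z := fun z hz =>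
      (hfix z (mem_ball_zero_iff.1 hz).le).1 (by rw [h0]; simp)
    refine ⟨hd, hm, id, differentiableOn_id, mapsTo_id _, hid, hid⟩
  obtain ⟨y, hy1, hy3, hy⟩ := exists_period hn ha hφ P.roots.toFinset
    ((Multiset.toFinset_card_le _).trans ((Polynomial.card_roots' _).trans (fixPoly_deg _ _)))
    (by
      intro z hz hfz
      rw [Multiset.mem_toFinset, Polynomial.mem_roots hP0]
      exact (hfix z hz.le).2 hfz)
  have hy2 : φ (φ y) ≠ y := by
    intro h
    rw [h] at hy3
    exact hy hy3
  set f : ℂ → ℂ := fun z => P.eval z * ((z - φ y) * (z - φ (φ y))) with hf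
  have hfd : Differentiable ℂ f := by
    have := P.differentiable
    simp only [hf]
    fun_prop
  have hfA : IsDiscAlg f := ⟨hfd.continuous.continuousOn, hfd.differentiableOn⟩
  have hintr : ∀ z ∈ ball (0:ℂ) 1, Tendsto (fun k => f (φ^[k] z)) atTop (𝓝 0) := by
    intro z hz
    apply tendsto_of_subseq_tendsto
    intro ns hns
    obtain ⟨ζ, hζ, ms, hms, hlim⟩ := (isCompact_closedBall (0:ℂ) 1).tendsto_subseq
      (x := fun k => φ^[ns k] z) (fun k => ball_subset_closedBall (hm.iterate _ hz))
    refine ⟨ms, ?_⟩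
    have hfz := orbit_acc hd hm hmc hcont hna (mem_ball_zero_iff.1 hz)
      (hns.comp hms.tendsto_atTop) hlim
    have h0 : f ζ = 0 := by
      simp only [hf, (hfix ζ (mem_closedBall_zero_iff.1 hζ)).2 hfz, zero_mul]
    rw [← h0]
    exact (hfd.continuous.tendsto ζ).comp hlim
  have hlim := me_limit hmc hcont hfA hME hintr y (mem_closedBall_zero_iff.2 hy1.le)
  have hfy : f y ≠ 0 := by
    simp only [hf]
    exact mul_ne_zero (fun h => hy ((hfix y hy1.le).1 h))
      (mul_ne_zero (sub_ne_zero.2 hy.symm) (sub_ne_zero.2 hy2.symm))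
  have hper : ∀ k, φ^[3 * k] y = y := by
    intro k
    rw [Function.iterate_mul]
    exact Function.iterate_fixed (by simpa using hy3) k
  have hval : ∀ k : ℕ, cesaro φ f (3 * (k + 1)) y = f y / 3 := by
    intro k
    unfold cesaro
    rw [sum_period (u := fun m => f (φ^[m] y)) (v := f y)]
    · have : ((k:ℂ) + 1) ≠ 0 := by exact_mod_cast Nat.succ_ne_zero k
      push_cast
      field_simp
    · intro k
      rw [add_comm, Function.iterate_add_apply, hper]
      simp [hf]
    · intro k
      rw [add_comm, Function.iterate_add_apply, hper]
      simp [hf]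
    · intro k
      rw [add_comm, Function.iterate_add_apply, hper]
      simp [hy3]
  have hsub : Tendsto (fun k : ℕ => 3 * (k + 1)) atTop atTop :=
    tendsto_atTop_mono (fun k => by simp only [id]; omega) tendsto_id
  have h1 := hlim.comp hsub
  have h2 : Tendsto (fun _ : ℕ => f y / 3) atTop (𝓝 0) := h1.congr hval
  have h3 := tendsto_nhds_unique h2 tendsto_const_nhds
  apply hfy
  have : f y = 3 * (f y / 3) := by ring
  rw [this, ← h3, mul_zero]

/-- **Finite Blaschke product symbols.** Let `φ` be a finite Blaschke product which is not
an elliptic automorphism of `𝔻`. Then `C_φ : A(𝔻) → A(𝔻)` is mean ergodic if and only if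
`φ` is a parabolic automorphism of `𝔻`. -/
theorem stmt_14 (φ : ℂ → ℂ)
    (hB : ∃ n : ℕ, 1 ≤ n ∧ ∃ θ : ℝ, ∃ a : Fin n → ℂ, (∀ i, ‖a i‖ < 1) ∧
      ∀ z ∈ closedBall (0:ℂ) 1,
        φ z = Complex.exp (θ * Complex.I) *
          ∏ i, (z - a i) / (1 - z * (starRingEnd ℂ) (a i)))
    (hne : ¬ IsEllipticAutomorphism φ) :
    MeanErgodicDiscAlg φ ↔ IsParabolicAutomorphism φ := by
  obtain ⟨n, hn, θ, a, ha, hφ'⟩ := hB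
  have hφ : ∀ z ∈ closedBall (0:ℂ) 1, φ z = Complex.exp (θ * I) * ∏ i, bl (a i) z := hφ'
  have hc1 : ‖Complex.exp (θ * I)‖ = 1 := Complex.norm_exp_ofReal_mul_I θ
  have hm := fbp_maps hn hc1 ha hφ
  have hmc := fbp_mapsc hc1 ha hφ
  have hcont := fbp_cont ha hφ
  constructor
  · intro hME
    by_cases h2 : 2 ≤ n
    · exact (high_false h2 ha hφ hME).elim
    · obtain rfl : n = 1 := by omega
      exact mob_me hc1 (ha 0) (fun z hz => by rw [hφ z hz]; simp) hm hmc hcont hne hME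
  · intro hP
    obtain rfl := fbp_auto_one hn ha hφ hP.1
    exact mob_par hc1 (ha 0) (fun z hz => by rw [hφ z hz]; simp) hmc hP
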